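/- If a word w' over Γ is obtained from a word w over Γ by a one-step reduction (replacing a factor X v Y, with X, Y ∈ {L, R, s}, by the single letter Red(XvY)), then for every state (p, d) ∈ ℂ × ℂ the turtle runs of w and w' from (p, d) have the same final position and the same final direction. -/

import Mathlib

/-!
The letter `v` turns the turtle around and steps back. Hence in a factor `X v Y` the step made by
`X` is undone by the step made by `v`, and the net displacement is the single step made by `Y`, in
the direction `ρ(Y) ρ(v) ρ(X) d = -ρ(X) ρ(Y) d`. The reduction table is exactly the one with
`ρ(Red(XvY)) = -ρ(X) ρ(Y)` (`rho_Red`), so the factor and its replacement act identically on every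
state (`run_factor`). A run is a left fold over the word, so the surrounding letters play no role.
-/

open Complex

/-- The boundary alphabet Γ = {L, R, s, v}. -/
inductive GammaLetter : Type
  | L | R | s | v
deriving DecidableEq

/-- The turn factor: ρ(L) = i, ρ(R) = -i, ρ(s) = 1, ρ(v) = -1. -/
noncomputable def rho : GammaLetter → ℂ
  | .L => I
  | .R => -I
  | .s => 1
  | .v => -1

/-- One turtle step: the letter x updates (p, d) by first d ↦ ρ(x)·d and then p ↦ p + d. -/
noncomputable def turtleStep (x : GammaLetter) (st : ℂ × ℂ) : ℂ × ℂ :=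
  (st.1 + rho x * st.2, rho x * st.2)

/-- The turtle run of a word from a state, processing letters left to right. -/
noncomputable def run (w : List GammaLetter) (st : ℂ × ℂ) : ℂ × ℂ :=
  w.foldl (fun st x => turtleStep x st) st

/-- The reduction table: RvR ↦ s, LvL ↦ s, RvL ↦ v, LvR ↦ v, svR ↦ L, svL ↦ R,
Rvs ↦ L, Lvs ↦ R, svs ↦ v.  (`Red X Y` is the value on the triple X v Y.) -/
def Red : GammaLetter → GammaLetter → GammaLetter
  | .R, .R => .s
  | .L, .L => .s
  | .R, .L => .v
  | .L, .R => .v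
  | .s, .R => .L
  | .s, .L => .R
  | .R, .s => .L
  | .L, .s => .R
  | .s, .s => .v
  | _, _ => .v

/-- One-step reduction: replace a factor X v Y (X, Y ∈ {L, R, s}) by Red(XvY). -/
def StepRed (w w' : List GammaLetter) : Prop :=
  ∃ (u t : List GammaLetter) (X Y : GammaLetter),
    (X = GammaLetter.L ∨ X = GammaLetter.R ∨ X = GammaLetter.s) ∧
    (Y = GammaLetter.L ∨ Y = GammaLetter.R ∨ Y = GammaLetter.s) ∧
    w = u ++ [X, GammaLetter.v, Y] ++ t ∧
    w' = u ++ [Red X Y] ++ t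

/-- The reduction table is determined by the product of the turn factors of `X`, `v` and `Y`. -/
theorem rho_Red {X Y : GammaLetter}
    (hX : X = GammaLetter.L ∨ X = GammaLetter.R ∨ X = GammaLetter.s)
    (hY : Y = GammaLetter.L ∨ Y = GammaLetter.R ∨ Y = GammaLetter.s) :
    rho (Red X Y) = -(rho X * rho Y) := by
  rcases hX with rfl | rfl | rfl <;> rcases hY with rfl | rfl | rfl <;> simp [Red, rho]

theorem run_append (w₁ w₂ : List GammaLetter) (st : ℂ × ℂ) :
    run (w₁ ++ w₂) st = run w₂ (run w₁ st) :=
  List.foldl_append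

theorem run_factor {X Y : GammaLetter}
    (hX : X = GammaLetter.L ∨ X = GammaLetter.R ∨ X = GammaLetter.s)
    (hY : Y = GammaLetter.L ∨ Y = GammaLetter.R ∨ Y = GammaLetter.s) (st : ℂ × ℂ) :
    run [X, GammaLetter.v, Y] st = run [Red X Y] st := by
  have hv : rho GammaLetter.v = -1 := rfl
  simp only [run, List.foldl_cons, List.foldl_nil, turtleStep, rho_Red hX hY, hv]
  ext1 <;> ring

/-- A one-step reduction preserves the final position and final direction of the
turtle run from any state. -/
theorem run_eq_of_stepRed (w w' : List GammaLetter) (h : StepRed w w') (p d : ℂ) :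
    run w (p, d) = run w' (p, d) := by
  obtain ⟨u, t, X, Y, hX, hY, rfl, rfl⟩ := h
  simp only [run_append, run_factor hX hY]
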